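/- Let G be a finite group acting faithfully and transitively on a finite set Z, and suppose G is not regular (i.e., some point stabilizer is nontrivial). Then G is primitive if and only if for all distinct α, β ∈ Z the subgroup generated by G_α and G_β equals G. -/

import Mathlib

/-!
A block containing two distinct points `α`, `β` has a setwise stabilizer containing both `G_α` and
`G_β`; if these generate `G`, the block is invariant, hence everything by transitivity.

Conversely, in a primitive group the point stabilizers are maximal subgroups, so `G_α ⊔ G_β = G`
unless `G_α = G_β`. The points with the same stabilizer as `α` form a block
(`isBlock_stabilizer_eq`). If that block has a second point, it is all of `Z`, so all
stabilizers coincide; by faithfulness they are trivial and the action is regular.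
-/

open Pointwise

/-- `B` is a block of the action of `G` on `Z`: for every `σ ∈ G`, the set `σ(B) ∩ B`
is empty or equals `B`. -/
def IsBlockOfAction (G : Type*) [Group G] {Z : Type*} [MulAction G Z] (B : Set Z) : Prop :=
  ∀ σ : G, σ • B ∩ B = ∅ ∨ σ • B ∩ B = B

/-- The trivial blocks are `∅`, `Z` and the singletons. -/
def IsTrivialBlock' {Z : Type*} (B : Set Z) : Prop :=
  B = ∅ ∨ B = Set.univ ∨ ∃ γ : Z, B = {γ}

/-- `G` is primitive on `Z` if every block is trivial. -/
def IsPrimitiveAction (G : Type*) [Group G] (Z : Type*) [MulAction G Z] : Prop :=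
  ∀ B : Set Z, IsBlockOfAction G B → IsTrivialBlock' B

/-- Mathlib's blocks satisfy `σ • B = B` whenever `σ • B` meets `B`, whereas the definition above
only gives `B ⊆ σ • B`. Applying the latter to `σ⁻¹` as well yields equality, even for infinite
`Z`. -/
lemma isBlockOfAction_iff {G Z : Type*} [Group G] [MulAction G Z] {B : Set Z} :
    IsBlockOfAction G B ↔ MulAction.IsBlock G B := by
  rw [MulAction.isBlock_iff_smul_eq_or_disjoint]
  constructor
  · intro h σ
    rcases h σ with h1 | h1
    · exact Or.inr (Set.disjoint_iff_inter_eq_empty.2 h1)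
    · have hsub : B ⊆ σ • B := Set.inter_eq_right.1 h1
      rcases h σ⁻¹ with h2 | h2
      · have hsub' : σ⁻¹ • B ⊆ B := by
          rwa [Set.smul_set_subset_iff_subset_inv_smul_set, inv_inv]
        rw [Set.inter_eq_left.2 hsub', Set.smul_set_eq_empty] at h2
        simp [h2]
      · have hsub' : B ⊆ σ⁻¹ • B := Set.inter_eq_right.1 h2
        exact Or.inl ((Set.smul_set_subset_iff_subset_inv_smul_set.2 hsub').antisymm hsub)
  · intro h σ
    rcases h σ with h1 | h1
    · exact Or.inr (by rw [h1, Set.inter_self])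
    · exact Or.inl (Set.disjoint_iff_inter_eq_empty.1 h1)

lemma isTrivialBlock'_iff {Z : Type*} {B : Set Z} :
    IsTrivialBlock' B ↔ MulAction.IsTrivialBlock B := by
  unfold IsTrivialBlock' MulAction.IsTrivialBlock
  constructor
  · rintro (rfl | rfl | ⟨γ, rfl⟩) <;> simp
  · rintro (h | h)
    · rcases h.eq_empty_or_singleton with h | h <;> tauto
    · exact Or.inr (Or.inl h)

/-- The points with the same stabilizer as `α` form a block, because
`G_{σγ} = σ G_γ σ⁻¹`. -/
lemma isBlock_stabilizer_eq {G Z : Type*} [Group G] [MulAction G Z] (α : Z) :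
    MulAction.IsBlock G
      {γ : Z | MulAction.stabilizer G γ = MulAction.stabilizer G α} := by
  rw [MulAction.isBlock_iff_smul_eq_of_mem]
  intro σ a ha hσa
  simp only [Set.mem_ofPred_eq, MulAction.stabilizer_smul_eq_stabilizer_map_conj] at ha hσa
  rw [ha] at hσa
  -- `hσa` now says that `σ` normalizes `G_α`.
  ext γ
  rw [Set.mem_smul_set_iff_inv_smul_mem, Set.mem_ofPred_eq, Set.mem_ofPred_eq]
  have hγ := MulAction.stabilizer_smul_eq_stabilizer_map_conj σ (σ⁻¹ • γ)
  rw [smul_inv_smul] at hγ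
  rw [hγ]
  conv_rhs => rhs; rw [← hσa]
  exact (Subgroup.map_injective (MulAut.conj σ).injective).eq_iff.symm

/-- **Theorem.** Let `G` be a finite group acting faithfully and transitively on a finite
set `Z`, and suppose `G` is not regular (some point stabilizer is nontrivial).  Then `G`
is primitive if and only if for all distinct `α, β ∈ Z` the subgroup generated by `G_α`
and `G_β` is all of `G`. -/
theorem primitive_iff_stabilizer_pairs_generate
    {G Z : Type*} [Group G] [Finite G] [MulAction G Z] [Finite Z]
    [FaithfulSMul G Z] [MulAction.IsPretransitive G Z]
    (hnonreg : ∃ α : Z, MulAction.stabilizer G α ≠ ⊥) :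
    IsPrimitiveAction G Z ↔
      ∀ α β : Z, α ≠ β →
        MulAction.stabilizer G α ⊔ MulAction.stabilizer G β = ⊤ := by
  simp only [IsPrimitiveAction, isBlockOfAction_iff, isTrivialBlock'_iff]
  constructor
  · intro h α β hαβ
    have : Nontrivial Z := ⟨α, β, hαβ⟩
    have hprim : MulAction.IsPreprimitive G Z := { isTrivialBlock_of_isBlock := @fun B => h B }
    have hmax (γ : Z) : IsCoatom (MulAction.stabilizer G γ) :=
      (MulAction.isCoatom_stabilizer_iff_preprimitive G γ).2 hprim
    refine ((hmax α).sup_eq_top_of_ne (hmax β)) fun heq => ?_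
    rcases h _ (isBlock_stabilizer_eq (G := G) α) with hB | hB
    · exact hαβ (hB (by simp) heq.symm)
    · obtain ⟨γ, hγ⟩ := hnonreg
      have hall (δ : Z) : MulAction.stabilizer G δ = MulAction.stabilizer G α :=
        Set.eq_univ_iff_forall.1 hB δ
      refine hγ ((Subgroup.eq_bot_iff_forall _).2 fun g hg => ?_)
      refine FaithfulSMul.eq_of_smul_eq_smul (α := Z) fun δ => ?_
      rw [hall γ, ← hall δ] at hg
      rw [one_smul]
      exact hg
  · intro h B hB
    by_cases hs : B.Subsingleton
    · exact Or.inl hs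
    · obtain ⟨α, hα, β, hβ, hne⟩ := Set.not_subsingleton_iff.1 hs
      right
      have htop : MulAction.stabilizer G B = ⊤ :=
        top_le_iff.1 ((h α β hne).symm.le.trans
          (sup_le (hB.stabilizer_le hα) (hB.stabilizer_le hβ)))
      rw [← hB.orbit_stabilizer_eq hα, htop]
      ext γ
      obtain ⟨g, hg⟩ := MulAction.exists_smul_eq G α γ
      exact iff_of_true ⟨⟨g, trivial⟩, hg⟩ trivial
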